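/- Let q ≥ 3 and let a₁ ≤ a₂ ≤ ⋯ ≤ a_q be positive integers, with V = ℂ^{a₁+1} ⊗ ⋯ ⊗ ℂ^{a_q+1}. (i) If a_q ≥ Π_{i=1}^{q−1}(a_i+1) − Σ_{i=1}^{q−1}a_i + 1, then the general tensor in V has rank exactly min{a_q+1, Π_{i=1}^{q−1}(a_i+1)}: there is a polynomial function F on V, not identically zero, such that every T ∈ V with F(T) ≠ 0 has rank min{a_q+1, Π_{i=1}^{q−1}(a_i+1)}. (ii) If a_q = Π_{i=1}^{q−1}(a_i+1) − Σ_{i=1}^{q−1}a_i, then the general tensor in V has rank exactly a_q+1. (iii) Under the hypothesis of (i), the Segre product ℙ^{a₁}×⋯×ℙ^{a_q} is not k-identifiable for any k with Π_{i=1}^{q−1}(a_i+1) − Σ_{i=1}^{q−1}a_i < k ≤ min{a_q+1, Π_{i=1}^{q−1}(a_i+1)}. -/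

import Mathlib

open scoped TensorProduct
open PiTensorProduct

noncomputable section

/-- The space of tensors `V = ℂ^{a₁+1} ⊗ ⋯ ⊗ ℂ^{a_q+1}`. -/
abbrev Ten (q : ℕ) (a : Fin q → ℕ) : Type :=
  ⨂[ℂ] i : Fin q, (Fin (a i + 1) → ℂ)

/-- Index type for the coordinates on the parameter space `W_k`. -/
abbrev WIdx (q : ℕ) (a : Fin q → ℕ) (k : ℕ) : Type :=
  Fin k × Σ j : Fin q, Fin (a j + 1)

/-- Index type for the standard (decomposable) basis of `Ten q a`. -/
abbrev BIdx (q : ℕ) (a : Fin q → ℕ) : Type := ∀ j : Fin q, Fin (a j + 1)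

/-- A tensor is decomposable if it is `v₁ ⊗ ⋯ ⊗ v_q` with all `vᵢ ≠ 0`. -/
def IsDecomposable {q : ℕ} {a : Fin q → ℕ} (t : Ten q a) : Prop :=
  ∃ v : ∀ j : Fin q, Fin (a j + 1) → ℂ, (∀ j, v j ≠ 0) ∧ t = tprod ℂ v

/-- The affine tangent space at `v₁ ⊗ ⋯ ⊗ v_q` to the cone over the Segre variety:
the span of all tensors obtained by replacing one factor of `v` by an arbitrary vector. -/
def tangent {q : ℕ} (a : Fin q → ℕ) (v : ∀ j : Fin q, Fin (a j + 1) → ℂ) :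
    Submodule ℂ (Ten q a) :=
  Submodule.span ℂ
    {x | ∃ (j : Fin q) (u : Fin (a j + 1) → ℂ), x = tprod ℂ (Function.update v j u)}

/-- The map `Φ : W_k → V` sending a `k`-tuple of factor vectors to the sum of the
corresponding decomposable tensors. -/
def Phi {q : ℕ} (a : Fin q → ℕ) {k : ℕ}
    (p : Fin k → ∀ j : Fin q, Fin (a j + 1) → ℂ) : Ten q a :=
  ∑ i, tprod ℂ (p i)

/-- Evaluation of a polynomial function on `W_k` at a parameter point. -/
def evalW {q : ℕ} {a : Fin q → ℕ} {k : ℕ}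
    (F : MvPolynomial (WIdx q a k) ℂ)
    (p : Fin k → ∀ j : Fin q, Fin (a j + 1) → ℂ) : ℂ :=
  MvPolynomial.eval (fun x => p x.1 x.2.1 x.2.2) F

/-- `k`-identifiability of the Segre product `ℙ^{a₁} × ⋯ × ℙ^{a_q}`:
there is a nonzero polynomial function `F` on `W_k` such that whenever `F(p) ≠ 0`,
the tensor `Φ(p)` has a rank-`k` decomposition, and any two rank-`k` decompositions
of `Φ(p)` agree as multisets of decomposable tensors. -/
def Identifiable (q : ℕ) (a : Fin q → ℕ) (k : ℕ) : Prop :=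
  ∃ F : MvPolynomial (WIdx q a k) ℂ,
    (∃ p, evalW F p ≠ 0) ∧
    ∀ p, evalW F p ≠ 0 →
      ((∃ t : Fin k → Ten q a, (∀ i, IsDecomposable (t i)) ∧ ∑ i, t i = Phi a p) ∧
       ∀ s t : Fin k → Ten q a,
         (∀ i, IsDecomposable (s i)) → (∀ i, IsDecomposable (t i)) →
         ∑ i, s i = Phi a p → ∑ i, t i = Phi a p →
         Finset.univ.val.map s = Finset.univ.val.map t)

/-- The standard decomposable basis vector of `Ten q a` indexed by `f`. -/
def basisVec {q : ℕ} (a : Fin q → ℕ) (f : BIdx q a) : Ten q a :=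
  tprod ℂ fun j => Pi.single (f j) 1

/-- The vector of `Ten q a` with coordinates `c` in the standard basis. -/
def fromCoords {q : ℕ} (a : Fin q → ℕ) (c : BIdx q a → ℂ) : Ten q a :=
  ∑ f : BIdx q a, c f • basisVec a f

/-- Evaluation of a polynomial function on `W_k × V^e` at a parameter point. -/
def evalWV {q : ℕ} {a : Fin q → ℕ} {k e : ℕ}
    (F : MvPolynomial (WIdx q a k ⊕ (Fin e × BIdx q a)) ℂ)
    (p : Fin k → ∀ j : Fin q, Fin (a j + 1) → ℂ)
    (c : Fin e → BIdx q a → ℂ) : ℂ :=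
  MvPolynomial.eval (Sum.elim (fun x => p x.1 x.2.1 x.2.2) (fun y => c y.1 y.2)) F

/-- `TangentGeneral q a k d` says: the general linear subspace of `V` of dimension `d`
which is tangent to the Segre at `k` general points is tangent only at those points.
Concretely, with `e = d - k(1 + Σᵢ aᵢ)`, there is a nonzero polynomial function `F` on
`W_k × V^e` such that whenever `F ≠ 0` at `(p, c)`, the space `L` spanned by the tangent
spaces at the `k` decomposable tensors determined by `p` together with the `e` extra
vectors determined by `c` has dimension exactly `d`, and any decomposable tensor whose
tangent space lies in `L` is a scalar multiple of one of the `k` given ones. -/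
def TangentGeneral (q : ℕ) (a : Fin q → ℕ) (k d : ℕ) : Prop :=
  ∃ F : MvPolynomial (WIdx q a k ⊕ (Fin (d - k * (1 + ∑ j, a j)) × BIdx q a)) ℂ,
    (∃ p c, evalWV F p c ≠ 0) ∧
    ∀ p c, evalWV F p c ≠ 0 →
      (Module.finrank ℂ
          ↥((⨆ i, tangent a (p i)) ⊔
            Submodule.span ℂ (Set.range fun m => fromCoords a (c m))) = d ∧
       ∀ w : ∀ j : Fin q, Fin (a j + 1) → ℂ, (∀ j, w j ≠ 0) →
         tangent a w ≤
           (⨆ i, tangent a (p i)) ⊔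
             Submodule.span ℂ (Set.range fun m => fromCoords a (c m)) →
         ∃ (i : Fin k) (t : ℂ), tprod ℂ w = t • tprod ℂ (p i))

/-- The rank of a tensor: the least `k` such that it is a sum of `k`
decomposable tensors. -/
def tensorRank {q : ℕ} {a : Fin q → ℕ} (T : Ten q a) : ℕ :=
  sInf {k | ∃ t : Fin k → Ten q a, (∀ i, IsDecomposable (t i)) ∧ ∑ i, t i = T}

section GenericPoints

variable {σ τ : Type}

/-- The algebra of polynomial functions on `σ → ℂ`. -/
def polyFun (σ : Type) : Subalgebra ℂ ((σ → ℂ) → ℂ) :=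
  (AlgHom.pi fun p : σ → ℂ => MvPolynomial.aeval (R := ℂ) p).range

theorem mem_polyFun_iff {g : (σ → ℂ) → ℂ} :
    g ∈ polyFun σ ↔ ∃ P : MvPolynomial σ ℂ, ∀ p, MvPolynomial.eval p P = g p := by
  simp only [polyFun, AlgHom.mem_range]
  refine exists_congr fun P => ?_
  rw [funext_iff]
  simp [MvPolynomial.aeval_eq_eval]

theorem coord_mem_polyFun (s : σ) : (fun p : σ → ℂ => p s) ∈ polyFun σ :=
  mem_polyFun_iff.2 ⟨MvPolynomial.X s, fun p => by simp⟩

theorem const_mem_polyFun (z : ℂ) : (fun _ : σ → ℂ => z) ∈ polyFun σ :=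
  mem_polyFun_iff.2 ⟨MvPolynomial.C z, fun p => by simp⟩

theorem sum_mem_polyFun {ι : Type*} (s : Finset ι) {g : ι → (σ → ℂ) → ℂ}
    (h : ∀ i ∈ s, g i ∈ polyFun σ) : (fun p => ∑ i ∈ s, g i p) ∈ polyFun σ := by
  have := sum_mem h
  convert this using 1
  ext p; simp

theorem prod_mem_polyFun {ι : Type*} (s : Finset ι) {g : ι → (σ → ℂ) → ℂ}
    (h : ∀ i ∈ s, g i ∈ polyFun σ) : (fun p => ∏ i ∈ s, g i p) ∈ polyFun σ := by
  have := prod_mem h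
  convert this using 1
  ext p; simp

theorem mul_mem_polyFun {g h : (σ → ℂ) → ℂ} (hg : g ∈ polyFun σ) (hh : h ∈ polyFun σ) :
    (fun p => g p * h p) ∈ polyFun σ := mul_mem hg hh

/-- `Q` holds on a nonempty Zariski open subset of `σ → ℂ`. -/
def Generic (Q : (σ → ℂ) → Prop) : Prop :=
  ∃ G : MvPolynomial σ ℂ, G ≠ 0 ∧ ∀ p, MvPolynomial.eval p G ≠ 0 → Q p

theorem Generic.and {Q R : (σ → ℂ) → Prop} (hQ : Generic Q) (hR : Generic R) :
    Generic fun p => Q p ∧ R p := by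
  obtain ⟨G, hG, hQ⟩ := hQ
  obtain ⟨H, hH, hR⟩ := hR
  refine ⟨G * H, mul_ne_zero hG hH, fun p hp => ?_⟩
  rw [map_mul] at hp
  exact ⟨hQ p (left_ne_zero_of_mul hp), hR p (right_ne_zero_of_mul hp)⟩

theorem Generic.forall {ι : Type*} [Fintype ι] {Q : ι → (σ → ℂ) → Prop}
    (h : ∀ i, Generic (Q i)) : Generic fun p => ∀ i, Q i p := by
  choose G hG hQ using h
  refine ⟨∏ i, G i, Finset.prod_ne_zero_iff.2 fun i _ => hG i, fun p hp i => hQ i p ?_⟩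
  rw [map_prod] at hp
  exact Finset.prod_ne_zero_iff.1 hp i (Finset.mem_univ i)

theorem Generic.mono {Q R : (σ → ℂ) → Prop} (hQ : Generic Q) (h : ∀ p, Q p → R p) :
    Generic R := by
  obtain ⟨G, hG, hQ⟩ := hQ
  exact ⟨G, hG, fun p hp => h p (hQ p hp)⟩

theorem Generic.exists {Q : (σ → ℂ) → Prop} (hQ : Generic Q) : ∃ p, Q p := by
  obtain ⟨G, hG, hQ⟩ := hQ
  by_contra! h
  refine hG (MvPolynomial.funext fun p => ?_)
  by_contra hp
  exact h p (hQ p (by simpa using hp))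

theorem Generic.of_polyFun {g : (σ → ℂ) → ℂ} (hg : g ∈ polyFun σ) {p₀ : σ → ℂ}
    (h : g p₀ ≠ 0) : Generic fun p => g p ≠ 0 := by
  obtain ⟨P, hP⟩ := mem_polyFun_iff.1 hg
  refine ⟨P, ?_, fun p hp => by rw [hP p] at hp; exact hp⟩
  rintro rfl
  exact h (by rw [← hP p₀, map_zero])

theorem det_mem_polyFun {r : Type*} [Fintype r] [DecidableEq r]
    {M : r → r → (σ → ℂ) → ℂ} (hM : ∀ i j, M i j ∈ polyFun σ) :
    (fun p => (Matrix.of fun i j => M i j p).det) ∈ polyFun σ := by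
  simp only [Matrix.det_apply', Matrix.of_apply]
  exact sum_mem_polyFun _ fun s _ => mul_mem_polyFun (const_mem_polyFun _)
    (prod_mem_polyFun _ fun i _ => hM _ _)

/-- Linear independence of vectors depending polynomially on a parameter is generic as soon as it
holds at one parameter. -/
theorem Generic.linearIndependent {r m : Type*} [Fintype r] [Fintype m]
    {u : (σ → ℂ) → r → m → ℂ} (hu : ∀ i l, (fun p => u p i l) ∈ polyFun σ) {p₀ : σ → ℂ}
    (h : LinearIndependent ℂ (u p₀)) : Generic fun p => LinearIndependent ℂ (u p) := by
  classical
  obtain ⟨π, hπ⟩ := ((Fintype.linearCombination ℂ (u p₀)).exists_leftInverse_of_injective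
    (LinearMap.ker_eq_bot.2 (linearIndependent_iff_injective_fintypeLinearCombination.1 h)))
  have hdet (p : σ → ℂ) : (fun p => (Matrix.of fun i j => π (u p i) j).det) p ≠ 0 →
      LinearIndependent ℂ (u p) := fun hp =>
    LinearIndependent.of_comp π (Matrix.linearIndependent_rows_of_det_ne_zero hp)
  refine (Generic.of_polyFun (det_mem_polyFun fun i j => ?_) (p₀ := p₀) ?_).mono hdet
  · have hexp (p : σ → ℂ) : π (u p i) j = ∑ l, u p i l * π (Pi.single l 1) j := by
      conv_lhs => rw [pi_eq_sum_univ' (u p i), map_sum]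
      simp [Finset.sum_apply]
    simp only [hexp]
    exact sum_mem_polyFun _ fun l _ => mul_mem_polyFun (hu i l) (const_mem_polyFun _)
  · have hone (i : r) : π (u p₀ i) = Pi.single i 1 := by
      have := LinearMap.congr_fun hπ (Pi.single i 1)
      simpa [Fintype.linearCombination_apply_single] using this
    have : (Matrix.of fun i j => π (u p₀ i) j) = (1 : Matrix r r ℂ) := by
      ext i j
      simp [hone, Matrix.one_apply, Pi.single_apply, eq_comm]
    simp [this]

/-- A dominant polynomial map hits every point of a nonempty Zariski open set. -/
theorem Generic.mem_range_of_injective [Finite σ] [Finite τ] (f : τ → MvPolynomial σ ℂ)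
    (hf : Function.Injective (MvPolynomial.aeval (R := ℂ) f)) :
    Generic fun c : τ → ℂ => ∃ p, ∀ t, MvPolynomial.eval p (f t) = c t := by
  set φ : MvPolynomial τ ℂ →ₐ[ℂ] MvPolynomial σ ℂ := MvPolynomial.aeval f
  have hfp : φ.toRingHom.FinitePresentation := by
    have hft : φ.toRingHom.FiniteType := by
      have : φ.FiniteType := AlgHom.FiniteType.of_comp_finiteType (f := Algebra.ofId ℂ _) (by
        have : (φ.comp (Algebra.ofId ℂ _)) = Algebra.ofId ℂ _ := Subsingleton.elim _ _
        rw [this]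
        exact RingHom.finiteType_algebraMap.2 inferInstance)
      exact this
    exact RingHom.FinitePresentation.of_finiteType.1 hft
  obtain ⟨S, hS⟩ := PrimeSpectrum.exists_constructibleSetData_iff.2
    (PrimeSpectrum.isConstructible_range_comap hfp)
  have hbot : (⊥ : PrimeSpectrum (MvPolynomial τ ℂ)) ∈ S.toSet := by
    rw [hS]
    refine ⟨⊥, ?_⟩
    ext x
    simp only [PrimeSpectrum.comap_asIdeal, Ideal.mem_comap]
    change φ x = 0 ↔ x = 0
    exact map_eq_zero_iff φ hf
  simp only [PrimeSpectrum.ConstructibleSetData.toSet, Set.mem_iUnion] at hbot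
  obtain ⟨C, hC, hg, hCf⟩ := hbot
  refine ⟨C.f, fun h0 => hCf (by simp [h0]), fun c hc => ?_⟩
  let x : PrimeSpectrum (MvPolynomial τ ℂ) :=
    ⟨RingHom.ker (MvPolynomial.eval c), RingHom.ker_isPrime _⟩
  have hx : x ∈ S.toSet := by
    simp only [PrimeSpectrum.ConstructibleSetData.toSet, Set.mem_iUnion]
    refine ⟨C, hC, ?_, ?_⟩
    · rintro _ ⟨i, rfl⟩
      have : C.g i = 0 := hg ⟨i, rfl⟩
      rw [this]
      exact zero_mem _
    · simpa [x] using hc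
  rw [hS] at hx
  obtain ⟨P, hP⟩ := hx
  obtain ⟨M, hM, hPM⟩ := P.asIdeal.exists_le_maximal P.isPrime.ne_top
  obtain ⟨p, rfl⟩ := (MvPolynomial.isMaximal_iff_eq_vanishingIdeal_singleton).1 hM
  refine ⟨p, fun t => ?_⟩
  have hmem : MvPolynomial.X t - MvPolynomial.C (c t) ∈ x.asIdeal := by simp [x]
  rw [← hP] at hmem
  have := (MvPolynomial.mem_vanishingIdeal_singleton_iff _ _).1 (hPM hmem)
  simpa [φ, MvPolynomial.aeval_eq_eval, sub_eq_zero] using this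

/-- A polynomial map with a surjective differential at one point hits every point of a nonempty
Zariski open set. -/
theorem Generic.mem_range_of_hasStrictFDerivAt [Fintype σ] [Fintype τ]
    {g : (σ → ℂ) → τ → ℂ} (hg : ∀ t, (fun p => g p t) ∈ polyFun σ) {p₀ : σ → ℂ}
    {g' : (σ → ℂ) →L[ℂ] (τ → ℂ)} (hd : HasStrictFDerivAt g g' p₀)
    (hsurj : Function.Surjective g') : Generic fun c : τ → ℂ => ∃ p, g p = c := by
  choose f hf using fun t => mem_polyFun_iff.1 (hg t)
  refine (Generic.mem_range_of_injective f ?_).mono fun c ⟨p, hp⟩ =>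
    ⟨p, funext fun t => by rw [← hp t, hf]⟩
  rw [injective_iff_map_eq_zero]
  intro G hG
  have hvan (p : σ → ℂ) : MvPolynomial.eval (g p) G = 0 := by
    have := congrArg (MvPolynomial.eval p) hG
    rw [map_zero, ← MvPolynomial.aeval_eq_eval, MvPolynomial.comp_aeval_apply] at this
    simpa [MvPolynomial.aeval_eq_eval, hf] using this
  have hmap := hd.map_nhds_eq_of_surj (LinearMap.range_eq_top.2 hsurj)
  have hev : ∀ᶠ c in nhds (g p₀), MvPolynomial.eval c G = 0 := by
    rw [← hmap, Filter.eventually_map]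
    exact Filter.Eventually.of_forall hvan
  obtain ⟨ε, hε, hball⟩ := Metric.eventually_nhds_iff_ball.1 hev
  refine MvPolynomial.funext_set (fun t => Metric.ball (g p₀ t) ε) (fun t => ?_) fun c hc => ?_
  · exact infinite_of_mem_nhds (g p₀ t) (Metric.ball_mem_nhds _ hε)
  · rw [map_zero]
    refine hball c ?_
    rw [ball_pi _ hε]
    exact hc

end GenericPoints

section Segre

variable {n k : ℕ} {d : Fin n → ℕ}

/-- The Segre map in coordinates, as a multilinear map. -/
def seg (d : Fin n → ℕ) : ContinuousMultilinearMap ℂ (fun j => Fin (d j + 1) → ℂ)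
    ((∀ j, Fin (d j + 1)) → ℂ) :=
  ContinuousMultilinearMap.pi fun f =>
    (ContinuousMultilinearMap.mkPiAlgebra ℂ (Fin n) ℂ).compContinuousLinearMap
      fun j => ContinuousLinearMap.proj (f j)

@[simp]
theorem seg_apply (x : ∀ j, Fin (d j + 1) → ℂ) (f : ∀ j, Fin (d j + 1)) :
    seg d x f = ∏ j, x j (f j) := by
  simp [seg]

theorem seg_single (f : ∀ j, Fin (d j + 1)) :
    seg d (fun j => Pi.single (f j) 1) = Pi.single f 1 := by
  ext g
  simp only [seg_apply, Pi.single_apply, Fintype.prod_ite_zero, Finset.prod_const_one]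
  exact if_congr funext_iff.symm rfl rfl

theorem eq_smul_of_seg_eq_smul {x x' : ∀ j, Fin (d j + 1) → ℂ} {c : ℂ}
    (h : seg d x' = c • seg d x) (h0 : seg d x' ≠ 0) (j : Fin n) : ∃ t : ℂ, x' j = t • x j := by
  obtain ⟨f, hf⟩ := Function.ne_iff.1 h0
  have key (y : ∀ j, Fin (d j + 1) → ℂ) (l : Fin (d j + 1)) :
      seg d y (Function.update f j l) = y j l * ∏ i ∈ Finset.univ.erase j, y i (f i) := by
    rw [seg_apply, ← Finset.mul_prod_erase _ _ (Finset.mem_univ j), Function.update_self]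
    congr 1
    refine Finset.prod_congr rfl fun i hi => ?_
    rw [Function.update_of_ne (Finset.ne_of_mem_erase hi)]
  have hA : ∏ i ∈ Finset.univ.erase j, x' i (f i) ≠ 0 := by
    rw [seg_apply, ← Finset.mul_prod_erase _ _ (Finset.mem_univ j)] at hf
    exact right_ne_zero_of_mul hf
  refine ⟨c * (∏ i ∈ Finset.univ.erase j, x i (f i)) / ∏ i ∈ Finset.univ.erase j, x' i (f i), ?_⟩
  ext l
  have := congrFun h (Function.update f j l)
  rw [Pi.smul_apply, key, key, smul_eq_mul] at this
  rw [Pi.smul_apply, smul_eq_mul, div_mul_eq_mul_div, eq_div_iff hA, this]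
  ring

/-- The map whose range is the sum of the tangent space to the Segre cone at `x i` and of the span
of the points `seg d (x l)`. -/
def tangentSpanMap (x : Fin k → ∀ j, Fin (d j + 1) → ℂ) (i : Fin k) :
    ((∀ j, Fin (d j + 1) → ℂ) × (Fin k → ℂ)) →ₗ[ℂ] ((∀ j, Fin (d j + 1)) → ℂ) :=
  ((seg d).linearDeriv (x i)).toLinearMap.coprod
    (Fintype.linearCombination ℂ fun l => seg d (x l))

theorem tangentSpanMap_apply (x : Fin k → ∀ j, Fin (d j + 1) → ℂ) (i : Fin k)
    (v : (∀ j, Fin (d j + 1) → ℂ) × (Fin k → ℂ)) :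
    tangentSpanMap x i v =
      ∑ j, seg d (Function.update (x i) j (v.1 j)) + ∑ l, v.2 l • seg d (x l) := by
  simp [tangentSpanMap, Fintype.linearCombination_apply]

theorem exists_finset_of_card_le (hk : k ≤ ∏ j, (d j + 1))
    (hN : ∏ j, (d j + 1) ≤ ∑ j, d j + k) :
    ∃ S : Finset (∀ j, Fin (d j + 1)), S.card = k ∧ 0 ∈ S ∧
      ∀ f, f ∉ S → ∃ j c, f = Function.update (0 : ∀ j, Fin (d j + 1)) j c := by
  let h : (Σ j, Fin (d j)) → ∀ j, Fin (d j + 1) := fun y => Function.update 0 y.1 y.2.succ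
  have hinj : Function.Injective h := by
    rintro ⟨j, c⟩ ⟨j', c'⟩ hh
    have h1 := congrFun hh j
    simp only [h, Function.update_self] at h1
    obtain rfl | hne := eq_or_ne j j'
    · simp only [Function.update_self] at h1
      rw [Fin.succ_injective _ h1]
    · rw [Function.update_of_ne hne] at h1
      exact absurd h1 (Fin.succ_ne_zero c)
  have hcard : (Finset.univ.image h).card = ∑ j, d j := by
    rw [Finset.card_image_of_injective _ hinj]
    simp
  obtain ⟨S, hS, -, hSk⟩ := Finset.exists_subsuperset_card_eq (n := k)
    (Finset.subset_univ (Finset.univ.image h)ᶜ)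
    (by rw [Finset.card_compl, hcard]; simpa [add_comm] using hN) (by simpa using hk)
  refine ⟨S, hSk, hS ?_, fun f hf => ?_⟩
  · simp only [Finset.mem_compl, Finset.mem_image, Finset.mem_univ, true_and, not_exists]
    rintro ⟨j, c⟩ h0
    have := congrFun h0 j
    simp only [h, Function.update_self, Pi.zero_apply] at this
    exact Fin.succ_ne_zero c this
  · have : f ∈ Finset.univ.image h := by
      by_contra hc
      exact hf (hS (Finset.mem_compl.2 hc))
    obtain ⟨⟨j, c⟩, -, rfl⟩ := Finset.mem_image.1 this
    exact ⟨j, _, rfl⟩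

/-- A configuration of points of the Segre variety such that the tangent space at one
of them, together with the other points, spans the ambient space. -/
theorem exists_points_tangentSpanMap_surjective (hk : k ≤ ∏ j, (d j + 1))
    (hN : ∏ j, (d j + 1) ≤ ∑ j, d j + k) (i : Fin k) :
    ∃ x : Fin k → ∀ j, Fin (d j + 1) → ℂ, Function.Surjective (tangentSpanMap x i) := by
  obtain ⟨S, hSk, h0, hS⟩ := exists_finset_of_card_le hk hN
  let e : Fin k ≃ S := (S.equivFinOfCardEq hSk).symm
  let e' : Fin k ≃ S := (Equiv.swap i (e.symm ⟨0, h0⟩)).trans e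
  have hei : (e' i : ∀ j, Fin (d j + 1)) = 0 := by simp [e']
  let x : Fin k → ∀ j, Fin (d j + 1) → ℂ := fun l j => Pi.single ((e' l : ∀ j, Fin (d j + 1)) j) 1
  have hx (l : Fin k) : seg d (x l) = Pi.single (e' l : ∀ j, Fin (d j + 1)) 1 := seg_single _
  refine ⟨x, ?_⟩
  rw [← LinearMap.range_eq_top, eq_top_iff, ← (Pi.basisFun ℂ _).span_eq, Submodule.span_le]
  rintro _ ⟨f, rfl⟩
  rw [Pi.basisFun_apply]
  by_cases hf : f ∈ S
  · refine ⟨(0, Pi.single (e'.symm ⟨f, hf⟩) 1), ?_⟩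
    simp [tangentSpanMap, Fintype.linearCombination_apply_single, hx,
      -ContinuousMultilinearMap.linearDeriv_apply]
  · obtain ⟨j, c, rfl⟩ := hS f hf
    refine ⟨(Pi.single j (Pi.single c 1), 0), ?_⟩
    rw [tangentSpanMap_apply, Finset.sum_eq_single j]
    · simp only [Pi.zero_apply, zero_smul, Finset.sum_const_zero, add_zero, Pi.single_eq_same]
      rw [← seg_single]
      congr 1
      ext j' : 1
      obtain rfl | hne := eq_or_ne j' j
      · simp
      · simp [Function.update_of_ne hne, x, hei]
    · intro j' _ hne
      dsimp only
      rw [Pi.single_eq_of_ne hne]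
      exact (seg d).map_update_zero _ _
    · simp

theorem Generic.linearIndependent_seg {σ : Type} {X : (σ → ℂ) → Fin k → ∀ j, Fin (d j + 1) → ℂ}
    (hX : ∀ i j l, (fun p => X p i j l) ∈ polyFun σ) {p₀ : σ → ℂ}
    (h : LinearIndependent ℂ fun l => seg d (X p₀ l)) :
    Generic fun p => LinearIndependent ℂ fun l => seg d (X p l) := by
  refine Generic.linearIndependent (u := fun p l => seg d (X p l)) (fun i f => ?_) h
  simp only [seg_apply]
  exact prod_mem_polyFun _ fun j _ => hX _ _ _

theorem Generic.tangentSpanMap_surjective {σ : Type}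
    {X : (σ → ℂ) → Fin k → ∀ j, Fin (d j + 1) → ℂ}
    (hX : ∀ i j l, (fun p => X p i j l) ∈ polyFun σ) {p₀ : σ → ℂ} {i : Fin k}
    (h : Function.Surjective (tangentSpanMap (X p₀) i)) :
    Generic fun p => Function.Surjective (tangentSpanMap (X p) i) := by
  choose y hy using fun f : ∀ j, Fin (d j + 1) => h (Pi.single f 1)
  refine (Generic.linearIndependent (u := fun p f => tangentSpanMap (X p) i (y f)) (p₀ := p₀)
    (fun f g => ?_) ?_).mono fun p hp => ?_
  · simp only [tangentSpanMap_apply, Pi.add_apply, Finset.sum_apply, Pi.smul_apply, seg_apply,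
      smul_eq_mul]
    refine add_mem (sum_mem_polyFun _ fun j _ => prod_mem_polyFun _ fun j' _ => ?_)
      (sum_mem_polyFun _ fun l _ => mul_mem_polyFun (const_mem_polyFun _)
        (prod_mem_polyFun _ fun j _ => hX _ _ _))
    obtain rfl | hne := eq_or_ne j' j
    · simpa only [Function.update_self] using const_mem_polyFun _
    · simpa only [Function.update_of_ne hne] using hX _ _ _
  · simp only [hy]
    convert (Pi.basisFun ℂ (∀ j, Fin (d j + 1))).linearIndependent using 1
    ext l : 1
    simp
  · rw [← LinearMap.range_eq_top, eq_top_iff,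
      ← hp.span_eq_top_of_card_eq_finrank' (by simp), Submodule.span_le]
    rintro _ ⟨f, rfl⟩
    exact ⟨y f, rfl⟩

/-- If the span of the independent points `seg d (x l)` has codimension less than the dimension of
the Segre variety and meets it transversally at `seg d (x i)`, it contains another point of it. -/
theorem exists_seg_eq_sum_not_proportional {x : Fin k → ∀ j, Fin (d j + 1) → ℂ} {i : Fin k}
    (hN : ∏ j, (d j + 1) < ∑ j, d j + k) (hli : LinearIndependent ℂ fun l => seg d (x l))
    (hsurj : Function.Surjective (tangentSpanMap x i)) :
    ∃ (x' : ∀ j, Fin (d j + 1) → ℂ) (z : Fin k → ℂ), seg d x' = ∑ l, z l • seg d (x l) ∧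
      z i ≠ 0 ∧ ∀ c : ℂ, seg d x' ≠ c • seg d (x i) := by
  let E := ∀ j, Fin (d j + 1) → ℂ
  let A := (∀ j, Fin (d j + 1)) → ℂ
  let K₀ : Submodule ℂ E := Submodule.span ℂ (Set.range fun j : Fin n => Pi.single j (x i j))
  have hK₀ : Module.finrank ℂ K₀ ≤ n := (finrank_range_le_card _).trans (by simp)
  let K := LinearMap.ker (tangentSpanMap x i)
  let π : K →ₗ[ℂ] E := (LinearMap.fst ℂ E (Fin k → ℂ)).comp K.subtype
  have hπ : Function.Injective π := by
    rw [injective_iff_map_eq_zero]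
    rintro ⟨⟨u, z⟩, hz⟩ hu
    obtain rfl : u = 0 := hu
    have hz' : ∑ l, z l • seg d (x l) = 0 := by
      have : tangentSpanMap x i (0, z) = 0 := hz
      simpa [tangentSpanMap, Fintype.linearCombination_apply,
        -ContinuousMultilinearMap.linearDeriv_apply] using this
    have : z = 0 := funext (Fintype.linearIndependent_iff.1 hli z hz')
    subst this
    rfl
  have hK : n < Module.finrank ℂ K := by
    have h1 := (tangentSpanMap x i).finrank_range_add_finrank_ker
    rw [LinearMap.range_eq_top.2 hsurj, finrank_top] at h1
    have h2 : Module.finrank ℂ (E × (Fin k → ℂ)) = ∑ j, d j + n + k := by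
      simp [E, Module.finrank_pi_fintype, Finset.sum_add_distrib]
    have h3 : Module.finrank ℂ A = ∏ j, (d j + 1) := by simp [A]
    change _ + Module.finrank ℂ K = _ at h1
    change Module.finrank ℂ A + _ = Module.finrank ℂ (E × (Fin k → ℂ)) at h1
    omega
  obtain ⟨⟨⟨u, z₀⟩, hu⟩, huK₀⟩ : ∃ v : K, π v ∉ K₀ := by
    by_contra! hcon
    have hle : LinearMap.range π ≤ K₀ := by
      rintro _ ⟨v, rfl⟩
      exact hcon v
    have := Submodule.finrank_mono hle
    rw [LinearMap.finrank_range_of_inj hπ] at this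
    omega
  obtain ⟨φ, hφu, hφ⟩ := Submodule.exists_le_ker_of_notMem huK₀
  change φ u ≠ 0 at hφu
  let φc : E →L[ℂ] ℂ := LinearMap.toContinuousLinearMap φ
  let Lc : (Fin k → ℂ) →L[ℂ] A :=
    LinearMap.toContinuousLinearMap (Fintype.linearCombination ℂ fun l => seg d (x l))
  let H : E × (Fin k → ℂ) → A × ℂ := fun y => (seg d y.1 - Lc y.2, φc y.1)
  let a₀ : E × (Fin k → ℂ) := (x i, Pi.single i 1)
  have hH : HasStrictFDerivAt H
      (((((seg d).linearDeriv (x i)).comp (ContinuousLinearMap.fst ℂ E (Fin k → ℂ))) -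
        Lc.comp (ContinuousLinearMap.snd ℂ E (Fin k → ℂ))).prod
        (φc.comp (ContinuousLinearMap.fst ℂ E (Fin k → ℂ)))) a₀ := by
    refine HasStrictFDerivAt.prodMk (HasStrictFDerivAt.sub ?_ ?_) ?_
    · exact ((seg d).hasStrictFDerivAt (x i)).comp a₀ hasStrictFDerivAt_fst
    · exact Lc.hasStrictFDerivAt.comp a₀ hasStrictFDerivAt_snd
    · exact φc.hasStrictFDerivAt.comp a₀ hasStrictFDerivAt_fst
  have hmap := hH.map_nhds_eq_of_surj (LinearMap.range_eq_top.2 (by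
    rintro ⟨y, c⟩
    obtain ⟨⟨u₁, z₁⟩, h₁⟩ := hsurj y
    have hu' : tangentSpanMap x i (u, z₀) = 0 := hu
    obtain ⟨t, ht⟩ : ∃ t : ℂ, φ u₁ + t * φ u = c := ⟨(c - φ u₁) / φ u, by field_simp; ring⟩
    have h₂ : tangentSpanMap x i ((u₁, z₁) + t • (u, z₀)) = y := by
      rw [map_add, map_smul, hu', h₁]; simp
    refine ⟨(u₁ + t • u, -(z₁ + t • z₀)), Prod.ext ?_ ?_⟩
    · have : (seg d).linearDeriv (x i) (u₁ + t • u) + Lc (z₁ + t • z₀) = y := h₂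
      calc _ = (seg d).linearDeriv (x i) (u₁ + t • u) - Lc (-(z₁ + t • z₀)) := rfl
        _ = y := by rw [map_neg, sub_neg_eq_add, this]
    · simpa [φc] using ht))
  have hφx : φ (x i) = 0 := by
    have : x i ∈ K₀ := by
      have hsum : x i = ∑ j, Pi.single j (x i j) := (Finset.univ_sum_single (x i)).symm
      rw [hsum]
      exact Submodule.sum_mem _ fun j _ => Submodule.subset_span ⟨j, rfl⟩
    exact hφ this
  have hHa : H a₀ = 0 := by
    refine Prod.ext ?_ hφx
    simp [H, a₀, Lc, Fintype.linearCombination_apply_single]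
  have hz : ∀ᶠ y in nhds a₀, y.2 i ≠ 0 := by
    refine ContinuousAt.eventually_ne ?_ (by simp [a₀])
    fun_prop
  have hev : ∀ᶠ v in nhds (0 : A × ℂ), ∃ y, y.2 i ≠ 0 ∧ H y = v := by
    rw [← hHa, ← hmap, Filter.eventually_map]
    exact hz.mono fun y hy => ⟨y, hy, rfl⟩
  have hev' : ∀ᶠ ε in nhds (0 : ℂ), ∃ y, y.2 i ≠ 0 ∧ H y = ((0 : A), ε) := by
    have hc : Filter.Tendsto (fun ε : ℂ => ((0 : A), ε)) (nhds 0) (nhds (0 : A × ℂ)) :=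
      Continuous.tendsto' (by fun_prop) _ _ rfl
    exact hc.eventually hev
  obtain ⟨ε, ⟨⟨x', z⟩, hzi, hHy⟩, hε⟩ :=
    ((hev'.filter_mono nhdsWithin_le_nhds).and
      (self_mem_nhdsWithin : {(0 : ℂ)}ᶜ ∈ nhdsWithin 0 _)).exists
  have hseg : seg d x' = ∑ l, z l • seg d (x l) := by
    have := congrArg Prod.fst hHy
    simpa [H, Lc, sub_eq_zero, Fintype.linearCombination_apply] using this
  refine ⟨x', z, hseg, hzi, fun c hc => ?_⟩
  have hne : seg d x' ≠ 0 := fun h0 =>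
    hzi (Fintype.linearIndependent_iff.1 hli z (hseg ▸ h0) i)
  choose t ht using eq_smul_of_seg_eq_smul hc hne
  have hx'K : x' ∈ K₀ := by
    rw [← Finset.univ_sum_single x']
    refine Submodule.sum_mem _ fun j _ => ?_
    rw [ht j, Pi.single_smul]
    exact Submodule.smul_mem _ _ (Submodule.subset_span ⟨j, rfl⟩)
  have : φ x' = 0 := hφ hx'K
  exact hε ((congrArg Prod.snd hHy).symm.trans this)

end Segre

section Coordinates

variable {q : ℕ}

/-- The coordinates of a tensor in the standard basis. -/
def coordEquiv (a : Fin q → ℕ) : Ten q a ≃ₗ[ℂ] (BIdx q a → ℂ) :=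
  (Basis.piTensorProduct fun j => Pi.basisFun ℂ (Fin (a j + 1))).equivFun

theorem coordEquiv_tprod {a : Fin q → ℕ} (v : ∀ j, Fin (a j + 1) → ℂ) (f : BIdx q a) :
    coordEquiv a (tprod ℂ v) f = ∏ j, v j (f j) := by
  simp [coordEquiv]

theorem coordEquiv_fromCoords {a : Fin q → ℕ} (c : BIdx q a → ℂ) :
    coordEquiv a (fromCoords a c) = c := by
  rw [← LinearEquiv.eq_symm_apply]
  simp [coordEquiv, fromCoords, basisVec, Module.Basis.equivFun_symm_apply]

/-- A sum of possibly zero product tensors is a sum of at most as many decomposable ones. -/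
theorem exists_isDecomposable_sum_eq {a : Fin q → ℕ} {ι : Type*} [Fintype ι]
    (v : ι → ∀ j, Fin (a j + 1) → ℂ) :
    ∃ r ≤ Fintype.card ι, ∃ t : Fin r → Ten q a,
      (∀ i, IsDecomposable (t i)) ∧ ∑ i, t i = ∑ i, tprod ℂ (v i) := by
  classical
  let S : Finset ι := Finset.univ.filter fun i => ∀ j, v i j ≠ 0
  refine ⟨S.card, S.card_le_univ, fun i => tprod ℂ (v (S.equivFin.symm i)), fun i => ?_, ?_⟩
  · exact ⟨_, (Finset.mem_filter.1 (S.equivFin.symm i).2).2, rfl⟩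
  · rw [Equiv.sum_comp S.equivFin.symm fun i : S => tprod ℂ (v i),
      Finset.sum_coe_sort S fun i => tprod ℂ (v i)]
    refine Finset.sum_subset (Finset.subset_univ S) fun i _ hi => ?_
    simp only [S, Finset.mem_filter, Finset.mem_univ, true_and, not_forall, not_not] at hi
    obtain ⟨j, hj⟩ := hi
    exact (PiTensorProduct.tprod ℂ).map_coord_zero j hj

theorem tensorRank_eq_of_forall_le {a : Fin q → ℕ} {ι : Type*} [Fintype ι] {T : Ten q a}
    (v : ι → ∀ j, Fin (a j + 1) → ℂ) (hT : ∑ i, tprod ℂ (v i) = T)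
    (hle : ∀ (r : ℕ) (w : Fin r → ∀ j, Fin (a j + 1) → ℂ),
      ∑ i, tprod ℂ (w i) = T → Fintype.card ι ≤ r) :
    tensorRank T = Fintype.card ι := by
  obtain ⟨r, hr, t, ht, hsum⟩ := exists_isDecomposable_sum_eq v
  rw [hT] at hsum
  have hmem : r ∈ {k | ∃ t : Fin k → Ten q a, (∀ i, IsDecomposable (t i)) ∧ ∑ i, t i = T} :=
    ⟨t, ht, hsum⟩
  refine le_antisymm ((Nat.sInf_le hmem).trans hr) (le_csInf ⟨r, hmem⟩ ?_)
  rintro r' ⟨t', ht', hsum'⟩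
  choose w _ hw' using ht'
  exact hle r' w (by simpa only [← hw'] using hsum')

end Coordinates

section LastFactor

variable {n : ℕ} {a : Fin (n + 1) → ℕ}

/-- The product tensor with factors `x` and last factor `w`. -/
def tprodSnoc (x : ∀ j : Fin n, Fin (a j.castSucc + 1) → ℂ)
    (w : Fin (a (Fin.last n) + 1) → ℂ) : Ten (n + 1) a :=
  tprod ℂ (Fin.snoc (α := fun j => Fin (a j + 1) → ℂ) x w)

theorem tprod_eq_tprodSnoc (v : ∀ j, Fin (a j + 1) → ℂ) :
    tprod ℂ v = tprodSnoc (a := a) (fun j => v j.castSucc) (v (Fin.last n)) := by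
  rw [tprodSnoc]
  congr 1
  exact (Fin.snoc_init_self v).symm

theorem coordEquiv_tprodSnoc (x : ∀ j : Fin n, Fin (a j.castSucc + 1) → ℂ)
    (w : Fin (a (Fin.last n) + 1) → ℂ) (f : BIdx (n + 1) a) :
    coordEquiv a (tprodSnoc x w) f =
      seg (fun j => a j.castSucc) x (fun j => f j.castSucc) * w (f (Fin.last n)) := by
  rw [tprodSnoc, coordEquiv_tprod, Fin.prod_univ_castSucc]
  simp

theorem isDecomposable_tprodSnoc {x : ∀ j : Fin n, Fin (a j.castSucc + 1) → ℂ}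
    {w : Fin (a (Fin.last n) + 1) → ℂ} (hx : seg (fun j => a j.castSucc) x ≠ 0) (hw : w ≠ 0) :
    IsDecomposable (tprodSnoc (a := a) x w) := by
  refine ⟨_, fun j => ?_, rfl⟩
  induction j using Fin.lastCases with
  | last => simpa using hw
  | cast j =>
    rw [Fin.snoc_castSucc]
    exact fun h => hx ((seg _).map_coord_zero j h)

/-- The index of `BIdx` with given last entry. -/
abbrev snocIdx (f : ∀ j : Fin n, Fin (a j.castSucc + 1)) (l : Fin (a (Fin.last n) + 1)) :
    BIdx (n + 1) a :=
  Fin.snoc (α := fun j => Fin (a j + 1)) f l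

theorem Generic.le_length_of_sum_tprod_eq {K : ℕ} (hN : K ≤ ∏ j : Fin n, (a j.castSucc + 1))
    (hm : K ≤ a (Fin.last n) + 1) :
    Generic fun c : BIdx (n + 1) a → ℂ =>
      ∀ (r : ℕ) (w : Fin r → ∀ j, Fin (a j + 1) → ℂ),
        ∑ i, tprod ℂ (w i) = fromCoords a c → K ≤ r := by
  obtain ⟨ι⟩ : Nonempty (Fin K ↪ ∀ j : Fin n, Fin (a j.castSucc + 1)) :=
    Function.Embedding.nonempty_of_card_le (by simpa using hN)
  let κ : Fin K ↪ Fin (a (Fin.last n) + 1) := Fin.castLEEmb hm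
  classical
  let c₀ : BIdx (n + 1) a → ℂ := fun t => if ∃ r, t = snocIdx (ι r) (κ r) then 1 else 0
  have hdet : (fun c : BIdx (n + 1) a → ℂ =>
      (Matrix.of fun r s => c (snocIdx (ι r) (κ s))).det) ∈ polyFun _ :=
    det_mem_polyFun fun r s => coord_mem_polyFun _
  refine (Generic.of_polyFun hdet (p₀ := c₀) ?_).mono fun c hc r w hw => ?_
  · have : (Matrix.of fun r s => c₀ (snocIdx (ι r) (κ s))) = 1 := by
      ext r s
      simp only [Matrix.of_apply, c₀, Matrix.one_apply]
      refine if_congr ⟨?_, ?_⟩ rfl rfl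
      · rintro ⟨r', h⟩
        obtain ⟨h1, h2⟩ := Fin.snoc_inj.1 h
        exact (ι.injective h1).trans (κ.injective h2).symm
      · rintro rfl
        exact ⟨r, rfl⟩
    simp [this]
  · let A : Matrix (Fin K) (Fin r) ℂ := Matrix.of fun s i =>
      seg (fun j : Fin n => a j.castSucc) (fun j => w i j.castSucc) (ι s)
    let B : Matrix (Fin r) (Fin K) ℂ := Matrix.of fun i s => w i (Fin.last n) (κ s)
    have hAB : (Matrix.of fun r s => c (snocIdx (ι r) (κ s))) = A * B := by
      ext s s'
      rw [Matrix.of_apply, ← coordEquiv_fromCoords c, ← hw, map_sum, Finset.sum_apply,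
        Matrix.mul_apply]
      refine Finset.sum_congr rfl fun i _ => ?_
      rw [tprod_eq_tprodSnoc, coordEquiv_tprodSnoc]
      simp [A, B, snocIdx]
    have h1 : (A * B).rank = K := by
      rw [← hAB, Matrix.rank_of_isUnit _ ((Matrix.isUnit_iff_isUnit_det _).2 hc.isUnit)]
      simp
    have h2 : (A * B).rank ≤ r := (Matrix.rank_mul_le_left A B).trans (A.rank_le_width)
    omega

theorem sum_tprodSnoc_single (c : BIdx (n + 1) a → ℂ) :
    ∑ f : ∀ j : Fin n, Fin (a j.castSucc + 1),
      tprodSnoc (a := a) (fun j => Pi.single (f j) 1) (fun l => c (snocIdx f l)) =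
        fromCoords a c := by
  apply (coordEquiv a).injective
  rw [coordEquiv_fromCoords, map_sum]
  ext t
  rw [Finset.sum_apply]
  simp only [coordEquiv_tprodSnoc, seg_single]
  rw [Finset.sum_eq_single (fun j : Fin n => t j.castSucc : ∀ j : Fin n, Fin (a j.castSucc + 1))]
  · rw [Pi.single_eq_same, one_mul]
    exact congrArg c (Fin.snoc_init_self t)
  · intro f _ hf
    rw [Pi.single_eq_of_ne hf.symm, zero_mul]
  · simp

/-- The first factors of the `i`-th product tensor encoded by a point of the parameter space. -/
abbrev firstFactors {k : ℕ} (p : WIdx (n + 1) a k → ℂ) (i : Fin k) :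
    ∀ j : Fin n, Fin (a j.castSucc + 1) → ℂ :=
  fun j l => p (i, ⟨j.castSucc, l⟩)

/-- The last factor of the `i`-th product tensor encoded by a point of the parameter space. -/
abbrev lastFactor {k : ℕ} (p : WIdx (n + 1) a k → ℂ) (i : Fin k) :
    Fin (a (Fin.last n) + 1) → ℂ :=
  fun l => p (i, ⟨Fin.last n, l⟩)

/-- The point of the parameter space with given factors. -/
def joinFactors {k : ℕ} (x : Fin k → ∀ j : Fin n, Fin (a j.castSucc + 1) → ℂ)
    (w : Fin k → Fin (a (Fin.last n) + 1) → ℂ) : WIdx (n + 1) a k → ℂ :=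
  fun y => Fin.snoc (α := fun j => Fin (a j + 1) → ℂ) (x y.1) (w y.1) y.2.1 y.2.2

@[simp]
theorem firstFactors_joinFactors {k : ℕ}
    (x : Fin k → ∀ j : Fin n, Fin (a j.castSucc + 1) → ℂ)
    (w : Fin k → Fin (a (Fin.last n) + 1) → ℂ) : firstFactors (joinFactors x w) = x := by
  ext i j l
  simp [joinFactors]

@[simp]
theorem lastFactor_joinFactors {k : ℕ}
    (x : Fin k → ∀ j : Fin n, Fin (a j.castSucc + 1) → ℂ)
    (w : Fin k → Fin (a (Fin.last n) + 1) → ℂ) : lastFactor (joinFactors x w) = w := by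
  ext i l
  simp [joinFactors]

variable {k : ℕ}

theorem Generic.tangentSpanMap_firstFactors_surjective
    (hk : k ≤ ∏ j : Fin n, (a j.castSucc + 1))
    (hN : ∏ j : Fin n, (a j.castSucc + 1) ≤ ∑ j : Fin n, a j.castSucc + k) (i : Fin k) :
    Generic fun p : WIdx (n + 1) a k → ℂ =>
      Function.Surjective (tangentSpanMap (firstFactors p) i) := by
  obtain ⟨x, hx⟩ := exists_points_tangentSpanMap_surjective hk hN i
  exact Generic.tangentSpanMap_surjective (X := firstFactors) (fun _ _ _ => coord_mem_polyFun _)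
    (p₀ := joinFactors x 0) (by rwa [firstFactors_joinFactors])

theorem Generic.linearIndependent_firstFactors
    (hk : k ≤ ∏ j : Fin n, (a j.castSucc + 1)) :
    Generic fun p : WIdx (n + 1) a k → ℂ =>
      LinearIndependent ℂ fun i => seg (fun j => a j.castSucc) (firstFactors p i) := by
  obtain ⟨ι⟩ : Nonempty (Fin k ↪ ∀ j : Fin n, Fin (a j.castSucc + 1)) :=
    Function.Embedding.nonempty_of_card_le (by simpa using hk)
  refine Generic.linearIndependent_seg (X := firstFactors) (fun _ _ _ => coord_mem_polyFun _)
    (p₀ := joinFactors (fun i j => Pi.single (ι i j) 1) 0) ?_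
  rw [firstFactors_joinFactors]
  simp only [seg_single]
  convert (Pi.basisFun ℂ (∀ j : Fin n, Fin (a j.castSucc + 1))).linearIndependent.comp ι
    ι.injective using 1
  ext l : 1
  simp

theorem Generic.linearIndependent_lastFactor (hk : k ≤ a (Fin.last n) + 1) :
    Generic fun p : WIdx (n + 1) a k → ℂ => LinearIndependent ℂ (lastFactor p) := by
  refine Generic.linearIndependent (u := lastFactor) (fun _ _ => coord_mem_polyFun _)
    (p₀ := joinFactors 0 fun i => Pi.single (Fin.castLE hk i) 1) ?_
  rw [lastFactor_joinFactors]
  convert (Pi.basisFun ℂ (Fin (a (Fin.last n) + 1))).linearIndependent.comp (Fin.castLE hk)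
    (Fin.castLE_injective hk) using 1
  ext l : 1
  simp

/-- The general tensor is a sum of `a_q + 1` product tensors in the unbalanced range. -/
theorem Generic.exists_sum_tprodSnoc_eq (hm : a (Fin.last n) + 1 ≤ ∏ j : Fin n, (a j.castSucc + 1))
    (hN : ∏ j : Fin n, (a j.castSucc + 1) ≤ ∑ j : Fin n, a j.castSucc + (a (Fin.last n) + 1)) :
    Generic fun c : BIdx (n + 1) a → ℂ =>
      ∃ p : WIdx (n + 1) a (a (Fin.last n) + 1) → ℂ,
        ∑ i, tprodSnoc (a := a) (firstFactors p i) (lastFactor p i) = fromCoords a c := by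
  let d : Fin n → ℕ := fun j => a j.castSucc
  let σ := WIdx (n + 1) a (a (Fin.last n) + 1)
  let g : (σ → ℂ) → BIdx (n + 1) a → ℂ := fun p t =>
    ∑ i, seg d (firstFactors p i) (fun j => t j.castSucc) * lastFactor p i (t (Fin.last n))
  obtain ⟨p₁, hp₁⟩ :=
    (Generic.forall (Generic.tangentSpanMap_firstFactors_surjective (a := a) hm hN)).exists
  let p₀ : σ → ℂ := joinFactors (firstFactors p₁) fun i => Pi.single i 1
  have hx₀ : firstFactors p₀ = firstFactors p₁ := firstFactors_joinFactors _ _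
  have hw₀ (i : Fin (a (Fin.last n) + 1)) : lastFactor p₀ i = Pi.single i 1 :=
    congrFun (lastFactor_joinFactors _ _) i
  let X (i : Fin (a (Fin.last n) + 1)) : (σ → ℂ) →L[ℂ] (∀ j, Fin (d j + 1) → ℂ) :=
    ContinuousLinearMap.pi fun j => ContinuousLinearMap.pi fun l =>
      ContinuousLinearMap.proj (i, ⟨j.castSucc, l⟩)
  let g' : (σ → ℂ) →L[ℂ] (BIdx (n + 1) a → ℂ) := ContinuousLinearMap.pi fun t =>
    ∑ i, (seg d (firstFactors p₀ i) (fun j => t j.castSucc) •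
        ContinuousLinearMap.proj (R := ℂ) (φ := fun _ : σ => ℂ)
          (i, ⟨Fin.last n, t (Fin.last n)⟩) +
      lastFactor p₀ i (t (Fin.last n)) •
        (ContinuousLinearMap.proj (R := ℂ) (φ := fun _ : (∀ j, Fin (d j + 1)) => ℂ)
          fun j => t j.castSucc).comp
            (((seg d).linearDeriv (firstFactors p₀ i)).comp (X i)))
  have hg' : HasStrictFDerivAt g g' p₀ := by
    refine hasStrictFDerivAt_pi.2 fun t => HasStrictFDerivAt.fun_sum fun i _ =>
      HasStrictFDerivAt.mul ?_ ?_
    · exact (ContinuousLinearMap.proj (R := ℂ) (φ := fun _ : (∀ j, Fin (d j + 1)) => ℂ)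
        fun j => t j.castSucc).hasStrictFDerivAt.comp p₀
          (((seg d).hasStrictFDerivAt (firstFactors p₀ i)).comp p₀ (X i).hasStrictFDerivAt)
    · exact ContinuousLinearMap.hasStrictFDerivAt
        (ContinuousLinearMap.proj (R := ℂ) (φ := fun _ : σ => ℂ)
          (i, ⟨Fin.last n, t (Fin.last n)⟩))
  have hg'_apply (v : σ → ℂ) (t : BIdx (n + 1) a) :
      g' v t = tangentSpanMap (firstFactors p₁) (t (Fin.last n))
        (firstFactors v (t (Fin.last n)), fun i => lastFactor v i (t (Fin.last n)))
          (fun j => t j.castSucc) := by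
    simp only [g', hx₀, tangentSpanMap, ContinuousLinearMap.coe_pi', LinearMap.coprod_apply,
      sum_apply, add_apply, smul_apply, ContinuousLinearMap.comp_apply,
      ContinuousLinearMap.proj_apply, Finset.sum_add_distrib, smul_eq_mul,
      Fintype.linearCombination_apply, Pi.add_apply, Finset.sum_apply, Pi.smul_apply]
    rw [add_comm]
    refine congrArg₂ _ ?_ (Finset.sum_congr rfl fun i _ => mul_comm _ _)
    rw [Finset.sum_eq_single (t (Fin.last n))]
    · rw [hw₀, Pi.single_eq_same, one_mul]
      rfl
    · intro i _ hi
      rw [hw₀, Pi.single_eq_of_ne hi.symm, zero_mul]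
    · simp
  have hsurj : Function.Surjective g' := by
    intro y
    choose v hv using fun l => hp₁ l fun f => y (snocIdx f l)
    refine ⟨joinFactors (fun l => (v l).1) fun i l => (v l).2 i, ?_⟩
    ext t
    rw [hg'_apply, firstFactors_joinFactors, lastFactor_joinFactors]
    change tangentSpanMap _ _ (v (t (Fin.last n))) _ = _
    rw [hv]
    exact congrArg y (Fin.snoc_init_self t)
  refine (Generic.mem_range_of_hasStrictFDerivAt (fun t => ?_) hg' hsurj).mono
    fun c ⟨p, hp⟩ => ⟨p, ?_⟩
  · refine sum_mem_polyFun _ fun i _ => mul_mem_polyFun ?_ (coord_mem_polyFun _)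
    simp only [seg_apply]
    exact prod_mem_polyFun _ fun j _ => coord_mem_polyFun _
  · apply (coordEquiv a).injective
    rw [coordEquiv_fromCoords, ← hp, map_sum]
    ext t
    rw [Finset.sum_apply]
    simp only [coordEquiv_tprodSnoc, g, d]

theorem Generic.tensorRank_eq
    (hN : ∏ j : Fin n, (a j.castSucc + 1) ≤ ∑ j : Fin n, a j.castSucc + (a (Fin.last n) + 1)) :
    Generic fun c : BIdx (n + 1) a → ℂ => tensorRank (fromCoords a c) =
      min (a (Fin.last n) + 1) (∏ j : Fin n, (a j.castSucc + 1)) := by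
  obtain hm | hm := le_total (a (Fin.last n) + 1) (∏ j : Fin n, (a j.castSucc + 1))
  · rw [min_eq_left hm]
    refine ((Generic.exists_sum_tprodSnoc_eq hm hN).and
      (Generic.le_length_of_sum_tprod_eq hm le_rfl)).mono fun c ⟨⟨p, hp⟩, hle⟩ => ?_
    rw [tensorRank_eq_of_forall_le _ hp (by simpa using hle), Fintype.card_fin]
  · rw [min_eq_right hm]
    refine (Generic.le_length_of_sum_tprod_eq le_rfl hm).mono fun c hle => ?_
    rw [tensorRank_eq_of_forall_le _ (sum_tprodSnoc_single c) (by simpa using hle)]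
    simp

theorem not_identifiable (hk : k ≤ ∏ j : Fin n, (a j.castSucc + 1))
    (hm : k ≤ a (Fin.last n) + 1)
    (hN : ∏ j : Fin n, (a j.castSucc + 1) < ∑ j : Fin n, a j.castSucc + k) :
    ¬ Identifiable (n + 1) a k := by
  rintro ⟨F, ⟨p₁, hp₁⟩, hF⟩
  have hk0 : 0 < k := by
    rcases Nat.eq_zero_or_pos k with rfl | h
    · obtain ⟨S, hS, h0, -⟩ := exists_finset_of_card_le hk hN.le
      rw [Finset.card_eq_zero] at hS
      simp [hS] at h0
    · exact h
  let i₀ : Fin k := ⟨0, hk0⟩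
  have hFgen : Generic fun p : WIdx (n + 1) a k → ℂ => MvPolynomial.eval p F ≠ 0 :=
    ⟨F, by rintro rfl; simp [evalW] at hp₁, fun _ h => h⟩
  obtain ⟨p, ⟨hpF, hv⟩, hw, ht⟩ := ((hFgen.and (Generic.linearIndependent_firstFactors hk)).and
    ((Generic.linearIndependent_lastFactor hm).and
      (Generic.tangentSpanMap_firstFactors_surjective hk hN.le i₀))).exists
  obtain ⟨x', z, hx', hz, hprop⟩ := exists_seg_eq_sum_not_proportional hN hv ht
  have hx'0 : seg (fun j : Fin n => a j.castSucc) x' ≠ 0 := fun h0 => hprop 0 (by rw [h0, zero_smul])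
  let v : Fin k → ∀ j : Fin n, Fin (a j.castSucc + 1) → ℂ := firstFactors p
  let w : Fin k → Fin (a (Fin.last n) + 1) → ℂ := lastFactor p
  let t : Fin k → Ten (n + 1) a := fun i => tprodSnoc (v i) (w i)
  let s : Fin k → Ten (n + 1) a := fun i =>
    if i = i₀ then tprodSnoc x' ((z i₀)⁻¹ • w i₀)
    else tprodSnoc (v i) (w i - (z i / z i₀) • w i₀)
  have hPhi : Phi a (fun i j l => p (i, ⟨j, l⟩)) = ∑ i, t i := by
    simp only [Phi, tprod_eq_tprodSnoc]
    rfl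
  have ht : ∀ i, IsDecomposable (t i) := fun i =>
    isDecomposable_tprodSnoc (hv.ne_zero i) (hw.ne_zero i)
  have hs : ∀ i, IsDecomposable (s i) := by
    intro i
    simp only [s]
    split_ifs with hi
    · exact isDecomposable_tprodSnoc hx'0 (smul_ne_zero (inv_ne_zero hz) (hw.ne_zero i₀))
    · refine isDecomposable_tprodSnoc (hv.ne_zero i) fun h0 => ?_
      have := (LinearIndepOn.pair_iff _ hi).1 (hw.linearIndepOn _) 1 (-(z i / z i₀))
        (by simpa [sub_eq_add_neg] using h0)
      exact one_ne_zero this.1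
  have hsum : ∑ i, s i = ∑ i, t i := by
    apply (coordEquiv a).injective
    ext f
    simp only [map_sum, Finset.sum_apply]
    have hsi (i : Fin k) : coordEquiv a (s i) f = coordEquiv a (t i) f -
        (z i • seg (fun j => a j.castSucc) (v i)) (fun j => f j.castSucc) *
          ((z i₀)⁻¹ * w i₀ (f (Fin.last n))) +
        if i = i₀ then seg (fun j => a j.castSucc) x' (fun j => f j.castSucc) *
          ((z i₀)⁻¹ * w i₀ (f (Fin.last n))) else 0 := by
      simp only [s, t]
      split_ifs with hi
      · rw [hi, coordEquiv_tprodSnoc, coordEquiv_tprodSnoc]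
        simp only [Pi.smul_apply, smul_eq_mul]
        field_simp
        ring
      · rw [coordEquiv_tprodSnoc, coordEquiv_tprodSnoc]
        simp only [Pi.smul_apply, Pi.sub_apply, smul_eq_mul]
        ring
    simp only [hsi, Finset.sum_add_distrib, Finset.sum_sub_distrib, ← Finset.sum_mul,
      Finset.sum_ite_eq', Finset.mem_univ, if_true]
    rw [hx', Finset.sum_apply]
    exact sub_add_cancel _ _
  have hmul := (hF (fun i j l => p (i, ⟨j, l⟩)) hpF).2 s t hs ht (hsum.trans hPhi.symm) hPhi.symm
  have hmem : s i₀ ∈ Finset.univ.val.map t := by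
    rw [← hmul]
    exact Multiset.mem_map_of_mem _ (Finset.mem_univ i₀)
  obtain ⟨i, -, hi⟩ := Multiset.mem_map.1 hmem
  have hcoord (f : ∀ j : Fin n, Fin (a j.castSucc + 1)) (l : Fin (a (Fin.last n) + 1)) :
      seg _ (v i) f * w i l = seg _ x' f * ((z i₀)⁻¹ * w i₀ l) := by
    have := congrFun (congrArg (coordEquiv a) hi) (snocIdx f l)
    simpa [s, t, coordEquiv_tprodSnoc, snocIdx, -seg_apply] using this
  obtain hii | hne := eq_or_ne i i₀
  · obtain ⟨l, hl⟩ := Function.ne_iff.1 (hw.ne_zero i₀)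
    refine hprop (z i₀) (funext fun f => ?_)
    have := hcoord f l
    rw [hii] at this
    have hl' : w i₀ l ≠ 0 := hl
    rw [← mul_assoc] at this
    have := mul_right_cancel₀ hl' this
    change _ = z i₀ * seg _ (v i₀) f
    rw [this]
    field_simp
  · obtain ⟨f, hf⟩ := Function.ne_iff.1 hx'0
    have := (LinearIndepOn.pair_iff _ hne).1 (hw.linearIndepOn _) (seg _ (v i) f)
      (-(seg _ x' f * (z i₀)⁻¹)) (by
        ext l
        have := hcoord f l
        simp only [Pi.add_apply, Pi.smul_apply, smul_eq_mul, Pi.zero_apply]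
        change seg _ (v i) f * w i l + _ * w i₀ l = 0
        rw [this]
        ring)
    exact mul_ne_zero hf (inv_ne_zero hz) (neg_eq_zero.1 this.2)

end LastFactor

theorem prod_filter_lt_eq {M : Type*} [CommMonoid M] {n : ℕ} (f : Fin (n + 1) → M) :
    ∏ i ∈ Finset.univ.filter (fun i : Fin (n + 1) => (i : ℕ) < n + 1 - 1), f i =
      ∏ j : Fin n, f j.castSucc := by
  rw [Finset.prod_filter, Fin.prod_univ_castSucc]
  simp

theorem sum_filter_lt_eq {M : Type*} [AddCommMonoid M] {n : ℕ} (f : Fin (n + 1) → M) :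
    ∑ i ∈ Finset.univ.filter (fun i : Fin (n + 1) => (i : ℕ) < n + 1 - 1), f i =
      ∑ j : Fin n, f j.castSucc := by
  rw [Finset.sum_filter, Fin.sum_univ_castSucc]
  simp

theorem Generic.exists_polynomial {σ : Type} {Q : (σ → ℂ) → Prop} (hQ : Generic Q) :
    ∃ F : MvPolynomial σ ℂ, (∃ c, MvPolynomial.eval c F ≠ 0) ∧
      ∀ c, MvPolynomial.eval c F ≠ 0 → Q c := by
  obtain ⟨F, hF, h⟩ := hQ
  exact ⟨F, Generic.exists ⟨F, hF, fun _ hc => hc⟩, h⟩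

/-- ranks of general tensors in the unbalanced case, and failure of
identifiability above the critical range. -/
theorem stmt_17 (q : ℕ) (hq : 3 ≤ q) (a : Fin q → ℕ) (hmono : Monotone a)
    (ha : ∀ i, 0 < a i) :
    (((∏ i ∈ Finset.univ.filter (fun i : Fin q => (i : ℕ) < q - 1), ((a i : ℤ) + 1)) -
        (∑ i ∈ Finset.univ.filter (fun i : Fin q => (i : ℕ) < q - 1), (a i : ℤ)) + 1 ≤ (a ⟨q - 1, by omega⟩ : ℤ)) →
      ∃ F : MvPolynomial (BIdx q a) ℂ,
        (∃ c, MvPolynomial.eval c F ≠ 0) ∧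
        ∀ c : BIdx q a → ℂ, MvPolynomial.eval c F ≠ 0 →
          tensorRank (fromCoords a c) =
            min (a ⟨q - 1, by omega⟩ + 1)
              (∏ i ∈ Finset.univ.filter (fun i : Fin q => (i : ℕ) < q - 1), (a i + 1))) ∧
    (((a ⟨q - 1, by omega⟩ : ℤ) = (∏ i ∈ Finset.univ.filter (fun i : Fin q => (i : ℕ) < q - 1), ((a i : ℤ) + 1)) -
        ∑ i ∈ Finset.univ.filter (fun i : Fin q => (i : ℕ) < q - 1), (a i : ℤ)) →
      ∃ F : MvPolynomial (BIdx q a) ℂ,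
        (∃ c, MvPolynomial.eval c F ≠ 0) ∧
        ∀ c : BIdx q a → ℂ, MvPolynomial.eval c F ≠ 0 →
          tensorRank (fromCoords a c) = a ⟨q - 1, by omega⟩ + 1) ∧
    (((∏ i ∈ Finset.univ.filter (fun i : Fin q => (i : ℕ) < q - 1), ((a i : ℤ) + 1)) -
        (∑ i ∈ Finset.univ.filter (fun i : Fin q => (i : ℕ) < q - 1), (a i : ℤ)) + 1 ≤ (a ⟨q - 1, by omega⟩ : ℤ)) →
      ∀ k : ℕ,
        (∏ i ∈ Finset.univ.filter (fun i : Fin q => (i : ℕ) < q - 1), ((a i : ℤ) + 1)) -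
          (∑ i ∈ Finset.univ.filter (fun i : Fin q => (i : ℕ) < q - 1), (a i : ℤ)) < (k : ℤ) →
        k ≤ min (a ⟨q - 1, by omega⟩ + 1) (∏ i ∈ Finset.univ.filter (fun i : Fin q => (i : ℕ) < q - 1), (a i + 1)) →
        ¬ Identifiable q a k) := by
  obtain ⟨n, rfl⟩ : ∃ n, q = n + 1 := ⟨q - 1, by omega⟩
  have hlast : (⟨n + 1 - 1, by omega⟩ : Fin (n + 1)) = Fin.last n := rfl
  have hcast : (∏ j : Fin n, ((a j.castSucc : ℤ) + 1)) = (∏ j : Fin n, (a j.castSucc + 1) : ℕ) := by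
    push_cast
    rfl
  have hpos : 0 < ∑ j : Fin n, a j.castSucc :=
    Finset.sum_pos (fun j _ => ha _) ⟨⟨0, by omega⟩, Finset.mem_univ _⟩
  simp only [prod_filter_lt_eq, sum_filter_lt_eq, hlast, hcast, ← Nat.cast_sum]
  refine ⟨fun h => (Generic.tensorRank_eq (by omega)).exists_polynomial, fun h => ?_,
    fun _ k hk hk' => not_identifiable (hk'.trans (min_le_right _ _))
      (hk'.trans (min_le_left _ _)) (by omega)⟩
  have hmin : min (a (Fin.last n) + 1) (∏ j : Fin n, (a j.castSucc + 1)) = a (Fin.last n) + 1 :=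
    min_eq_left (by omega)
  rw [← hmin]
  exact (Generic.tensorRank_eq (by omega)).exists_polynomial
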